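/- Let r ≥ 1 and n₁, …, n_r ≥ 0 be integers with n₁+⋯+n_r odd, let q be a nonzero real number, and let y₁, …, y_r be real numbers with y_l ≠ 1/2 for all l. Then ∫_0^q B_{n₁}( ((1−2y₁)/q)·z + y₁ ) ⋯ B_{n_r}( ((1−2y_r)/q)·z + y_r ) dz = 0. -/

import Mathlib

open Finset

/-- The `n`-th Bernoulli polynomial evaluated at a real number. -/
noncomputable def BPoly (n : ℕ) (x : ℝ) : ℝ :=
  Polynomial.eval x ((Polynomial.bernoulli n).map (algebraMap ℚ ℝ))

theorem BPoly_one_sub (k : ℕ) (x : ℝ) : BPoly k (1 - x) = (-1) ^ k * BPoly k x :=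
  bernoulliFun_eval_one_sub

/-- Vanishing of the special product integral (17a): if `n₁ + ⋯ + n_r` is odd then
`∫_0^q ∏ B_{n_l}(((1−2y_l)/q)z + y_l) dz = 0`, for `r = m + 1` factors. -/
theorem integral_prod_bernoulli_special_eq_zero (m : ℕ) (n : Fin (m + 1) → ℕ)
    (hodd : Odd (∑ l, n l)) (q : ℝ) (hq : q ≠ 0) (y : Fin (m + 1) → ℝ)
    (hy : ∀ l, y l ≠ 1 / 2) :
    ∫ z in (0 : ℝ)..q, ∏ l, BPoly (n l) ((1 - 2 * y l) / q * z + y l) = 0 := by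
  have h := intervalIntegral.integral_comp_sub_left (a := 0) (b := q)
    (fun z : ℝ => ∏ l, BPoly (n l) ((1 - 2 * y l) / q * z + y l)) q
  have key : ∀ z : ℝ, ∏ l, BPoly (n l) ((1 - 2 * y l) / q * (q - z) + y l)
      = -∏ l, BPoly (n l) ((1 - 2 * y l) / q * z + y l) := by
    intro z
    have h1 : ∀ l, BPoly (n l) ((1 - 2 * y l) / q * (q - z) + y l)
        = (-1) ^ n l * BPoly (n l) ((1 - 2 * y l) / q * z + y l) := by
      intro l
      rw [← BPoly_one_sub]
      congr 1
      field_simp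
      ring
    simp only [h1]
    rw [Finset.prod_mul_distrib, Finset.prod_pow_eq_pow_sum, hodd.neg_one_pow, neg_one_mul]
  simp only [key, sub_self, sub_zero, intervalIntegral.integral_neg] at h
  linarith
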